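/- Let S_1, ..., S_n be nonempty compact convex subsets of Euclidean spaces, S their product, and for each player i let v_i(x_i, x_{-i}) be continuous and concave in x_i, and h_{ik}(x_i, x_{-i}) (k = 1..d_i) be continuous and convex in x_i. Suppose each player i has a default action x_i^0 ∈ S_i with h_{ik}(x_i^0, x_{-i}) < 0 for all k and all x_{-i} ∈ S_{-i}. Then there exists x* ∈ S such that for every i, x*_i maximizes v_i(·, x*_{-i}) over { x_i ∈ S_i : h_{ik}(x_i, x*_{-i}) ≤ 0 for all k } (i.e., an equilibrium of the concave game with externality constraints exists). -/

import Mathlib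

/-!
An equilibrium is a fixed point of the product of the best-response correspondences, which
Kakutani's theorem provides. The values are nonempty and convex by compactness and
quasiconcavity. The graph is closed because a strictly feasible action stays feasible when the
opponents' actions change slightly, so that a limit of best responses beats every strictly feasible
action; by Slater's condition and convexity these are dense among the feasible actions.

Kakutani's theorem is reduced to a variational inequality by a continuous selection of separating
functionals, and the variational inequality to the existence of fixed points of bounded continuous
maps of a Euclidean space. The latter rests on Milnor's argument that a ball has no `C¹` retraction
`r` onto its boundary: for small `t` the map `(1 - t) x + t r x` is a bijection of the ball, so the
integral of its Jacobian, a polynomial in `t`, is constantly equal to the volume of the ball,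
whereas it vanishes for `t = 1`.
-/

open Set Filter Topology Metric MeasureTheory

section PolynomialIntegral

open Polynomial (C X)
open scoped Polynomial

theorem exists_polynomial_eval_eq_det_one_add_smul {R M : Type*} [CommRing R] [Nontrivial R]
    [AddCommGroup M] [Module R M] [Module.Free R M] [Module.Finite R M] (f : Module.End R M) :
    ∃ p : R[X], p.natDegree ≤ Module.finrank R M ∧ ∀ t, p.eval t = LinearMap.det (1 + t • f) := by
  classical
  let b := Module.finBasis R M
  let A := LinearMap.toMatrix b b f
  refine ⟨((X : R[X]) • A.map C + (1 : Matrix _ _ R).map C).det, ?_, fun t => ?_⟩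
  · simpa only [Fintype.card_fin] using Polynomial.natDegree_det_X_add_C_le A 1
  · have heval : (Polynomial.evalRingHom t).mapMatrix
        ((X : R[X]) • A.map C + (1 : Matrix _ _ R).map C) = 1 + t • A := by
      ext i j
      rcases eq_or_ne i j with rfl | hij
      · simp [mul_comm t, add_comm]
      · simp [hij, mul_comm t]
    rw [← Polynomial.coe_evalRingHom, RingHom.map_det, heval, ← LinearMap.det_toMatrix b]
    simp [A]

variable {α : Type*} [MeasurableSpace α] {μ : Measure α} {p : α → ℝ[X]} {n : ℕ}

theorem exists_polynomial_eval_eq_integral (hp : ∀ x, (p x).natDegree ≤ n)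
    (hint : ∀ t, Integrable (fun x => (p x).eval t) μ) :
    ∃ P : ℝ[X], ∀ t, P.eval t = ∫ x, (p x).eval t ∂μ := by
  let s := Finset.range (n + 1)
  let node : ℕ → ℝ := Nat.cast
  refine ⟨Lagrange.interpolate s node fun i => ∫ x, (p x).eval (node i) ∂μ, fun t => ?_⟩
  have hdeg (x : α) : (p x).degree < s.card := by
    rw [Finset.card_range]
    exact Polynomial.degree_le_natDegree.trans_lt (mod_cast Nat.lt_succ_of_le (hp x))
  have hinterp (x : α) : (p x).eval t =
      ∑ i ∈ s, (p x).eval (node i) * (Lagrange.basis s node i).eval t := by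
    conv_lhs => rw [Lagrange.eq_interpolate Nat.cast_injective.injOn (hdeg x)]
    simp only [Lagrange.interpolate_apply, Polynomial.eval_finsetSum, Polynomial.eval_mul,
      Polynomial.eval_C, node]
  simp_rw [hinterp]
  rw [integral_finsetSum _ fun i _ => (hint _).mul_const _]
  simp only [Lagrange.interpolate_apply, Polynomial.eval_finsetSum, Polynomial.eval_mul,
    Polynomial.eval_C, integral_mul_const]

theorem integral_eval_eq_of_infinite (hp : ∀ x, (p x).natDegree ≤ n)
    (hint : ∀ t, Integrable (fun x => (p x).eval t) μ) {c : ℝ}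
    (hc : {t | ∫ x, (p x).eval t ∂μ = c}.Infinite) (a : ℝ) : ∫ x, (p x).eval a ∂μ = c := by
  obtain ⟨P, hP⟩ := exists_polynomial_eval_eq_integral hp hint
  have hPc : P = C c :=
    P.eq_of_infinite_eval_eq (C c) (by simpa only [hP, Polynomial.eval_C] using hc)
  rw [← hP, hPc, Polynomial.eval_C]

end PolynomialIntegral

section Perturbation

theorem inter_frontier_nonempty_of_isPreconnected {X : Type*} [TopologicalSpace X] {s t : Set X}
    (ht : IsPreconnected t) (hs : (t ∩ s).Nonempty) (hsc : (t ∩ sᶜ).Nonempty) :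
    (t ∩ frontier s).Nonempty := by
  by_contra hempty
  have hcover : t ⊆ interior s ∪ interior sᶜ := by
    rwa [← compl_frontier_eq_union_interior, subset_compl_iff_disjoint_right,
      disjoint_iff_inter_eq_empty, ← not_nonempty_iff_eq_empty]
  have hmem {u v : Set X} (huv : t ⊆ interior u ∪ interior v) (hd : Disjoint u v)
      (hu : (t ∩ u).Nonempty) : (t ∩ interior u).Nonempty := by
    obtain ⟨x, hxt, hxu⟩ := hu
    exact ⟨x, hxt, (huv hxt).resolve_right fun hxv => hd.le_bot ⟨hxu, interior_subset hxv⟩⟩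
  obtain ⟨x, -, hxs, hxsc⟩ := ht _ _ isOpen_interior isOpen_interior hcover
    (hmem hcover disjoint_compl_right hs) (hmem (union_comm _ _ ▸ hcover) disjoint_compl_left hsc)
  exact interior_subset hxsc (interior_subset hxs)

theorem lipschitzWith_indicator_of_eqOn_frontier {E F : Type*} [NormedAddCommGroup E]
    [NormedSpace ℝ E] [NormedAddCommGroup F] {s : Set E} (hs : IsClosed s) {f : E → F} {K : NNReal}
    (hf : LipschitzOnWith K f s) (hf0 : EqOn f 0 (frontier s)) :
    LipschitzWith K (s.indicator f) := by
  have hcross {x y : E} (hx : x ∈ s) (hy : y ∉ s) : dist (f x) 0 ≤ K * dist x y := by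
    obtain ⟨z, hz, hzs⟩ := inter_frontier_nonempty_of_isPreconnected
      (convex_segment x y).isPreconnected ⟨x, left_mem_segment ℝ x y, hx⟩
      ⟨y, right_mem_segment ℝ x y, hy⟩
    have hxz : dist x z ≤ dist x y :=
      dist_add_dist_of_mem_segment hz ▸ le_add_of_nonneg_right dist_nonneg
    calc dist (f x) 0 = dist (f x) (f z) := by rw [hf0 hzs, Pi.zero_apply]
      _ ≤ K * dist x z := hf.dist_le_mul x hx z (hs.frontier_subset hzs)
      _ ≤ K * dist x y := by gcongr
  refine LipschitzWith.of_dist_le_mul fun x y => ?_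
  by_cases hx : x ∈ s <;> by_cases hy : y ∈ s
  · simpa only [indicator_of_mem hx, indicator_of_mem hy] using hf.dist_le_mul x hx y hy
  · simpa only [indicator_of_mem hx, indicator_of_notMem hy] using hcross hx hy
  · simpa only [indicator_of_notMem hx, indicator_of_mem hy, dist_comm] using hcross hy hx
  · simpa only [indicator_of_notMem hx, indicator_of_notMem hy, dist_self] using by positivity

theorem bijective_add_of_lipschitzWith {E : Type*} [NormedAddCommGroup E] [CompleteSpace E]
    {K : NNReal} (hK : K < 1) {f : E → E} (hf : LipschitzWith K f) :
    Function.Bijective fun x => x + f x := by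
  refine (Function.bijective_iff_existsUnique _).2 fun y => ?_
  have hcontr : ContractingWith K fun x => y - f x :=
    ⟨hK, LipschitzWith.of_dist_le_mul fun a b => by
      simpa only [dist_sub_left] using hf.dist_le_mul a b⟩
  have hfix (x : E) : x + f x = y ↔ Function.IsFixedPt (fun x => y - f x) x := by
    rw [Function.IsFixedPt, sub_eq_iff_eq_add, eq_comm]
  simp only [hfix]
  exact ⟨_, hcontr.fixedPoint_isFixedPt, fun x hx => hcontr.fixedPoint_unique hx⟩

theorem image_eq_self_of_bijective_of_eqOn_compl {α : Type*} {f : α → α}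
    (hf : Function.Bijective f) {s : Set α} (hs : EqOn f id sᶜ) : f '' s = s := by
  rw [← compl_inj_iff, ← image_compl_eq hf, hs.image_eq_self]

variable {E : Type*} [NormedAddCommGroup E] [NormedSpace ℝ E] {s : Set E} {g : E → E}

theorem eventually_det_one_add_smul_pos {X : Type*} [TopologicalSpace X] {s : Set X}
    (hs : IsCompact s) {A : X → E →L[ℝ] E} (hA : Continuous A) :
    ∀ᶠ t in 𝓝 (0 : ℝ), ∀ x ∈ s, 0 < (1 + t • A x).det := by
  refine hs.eventually_forall_of_forall_eventually fun x _ => ?_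
  have hcont : Continuous fun q : ℝ × X => (1 + q.1 • A q.2).det :=
    ContinuousLinearMap.continuous_det.comp (by fun_prop)
  refine hcont.continuousAt.eventually (lt_mem_nhds ?_)
  simp [ContinuousLinearMap.det]

variable [FiniteDimensional ℝ E]

theorem eventually_bijective_add_smul_indicator (hs : IsCompact s) (hsc : Convex ℝ s)
    (hg : ContDiff ℝ 1 g) (hg0 : EqOn g 0 (frontier s)) :
    ∀ᶠ t in 𝓝 (0 : ℝ), Function.Bijective fun x => x + t • s.indicator g x := by
  have := FiniteDimensional.complete ℝ E
  obtain ⟨K, hK⟩ := hg.contDiffOn.exists_lipschitzOnWith one_ne_zero hsc hs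
  have hsmall : ∀ᶠ t in 𝓝 (0 : ℝ), ‖t‖₊ * K < 1 := by
    have hcont : Continuous fun t : ℝ => ‖t‖₊ * K := by fun_prop
    exact hcont.continuousAt.eventually (gt_mem_nhds (by simp))
  filter_upwards [hsmall] with t ht
  exact bijective_add_of_lipschitzWith ht
    ((lipschitzWith_smul t).comp (lipschitzWith_indicator_of_eqOn_frontier hs.isClosed hK hg0))

variable [MeasurableSpace E] [BorelSpace E] (μ : Measure E) [μ.IsAddHaarMeasure]

theorem eventually_integral_det_one_add_smul_fderiv_eq (hs : IsCompact s) (hsc : Convex ℝ s)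
    (hg : ContDiff ℝ 1 g) (hg0 : EqOn g 0 (frontier s)) :
    ∀ᶠ t in 𝓝 (0 : ℝ), ∫ x in s, (1 + t • fderiv ℝ g x).det ∂μ = μ.real s := by
  filter_upwards [eventually_bijective_add_smul_indicator hs hsc hg hg0,
    eventually_det_one_add_smul_pos hs (hg.continuous_fderiv one_ne_zero)] with t hbij hpos
  let F : E → E := fun x => x + t • s.indicator g x
  have himage : F '' s = s := image_eq_self_of_bijective_of_eqOn_compl hbij fun x hx => by
    simp [indicator_of_notMem hx]
  have hderiv : ∀ x ∈ s, HasFDerivWithinAt F (1 + t • fderiv ℝ g x) s x := fun x hx =>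
    ((hasFDerivAt_id x).add
      ((hg.differentiable one_ne_zero x).hasFDerivAt.const_smul t)).hasFDerivWithinAt.congr
        (fun y hy => by simp [F, indicator_of_mem hy]) (by simp [F, indicator_of_mem hx])
  calc ∫ x in s, (1 + t • fderiv ℝ g x).det ∂μ
      = ∫ x in s, |(1 + t • fderiv ℝ g x).det| • (1 : ℝ) ∂μ :=
        setIntegral_congr_fun hs.measurableSet fun x hx => by
          simp only [abs_of_pos (hpos x hx), smul_eq_mul, mul_one]
    _ = ∫ _ in F '' s, (1 : ℝ) ∂μ := (integral_image_eq_integral_abs_det_fderiv_smul μ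
        hs.measurableSet hderiv hbij.injective.injOn fun _ => 1).symm
    _ = μ.real s := by rw [himage, setIntegral_const, smul_eq_mul, mul_one]

-- With `A = fderiv ℝ r - 1`, the integral of `(1 + t • A).det` is a polynomial in `t` which is
-- constant near `t = 0`, so its value at `t = 1` is the same constant.
theorem integral_det_fderiv_eq_measureReal (hs : IsCompact s) (hsc : Convex ℝ s) {r : E → E}
    (hr : ContDiff ℝ 1 r) (hrs : EqOn r id (frontier s)) :
    ∫ x in s, (fderiv ℝ r x).det ∂μ = μ.real s := by
  let A : E → E →L[ℝ] E := fun x => fderiv ℝ r x - 1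
  have hA : Continuous A := (hr.continuous_fderiv one_ne_zero).sub continuous_const
  have hfderiv : fderiv ℝ (fun x => r x - x) = A := funext fun x =>
    ((hr.differentiable one_ne_zero x).hasFDerivAt.sub (hasFDerivAt_id x)).fderiv
  choose p hdeg hp using fun x => exists_polynomial_eval_eq_det_one_add_smul (A x : E →ₗ[ℝ] E)
  replace hp (x : E) (t : ℝ) : (p x).eval t = (1 + t • A x).det := hp x t
  have hint (t : ℝ) : IntegrableOn (fun x => (p x).eval t) s μ := by
    simp only [hp]
    exact (ContinuousLinearMap.continuous_det.comp
      (continuous_const.add (hA.const_smul t))).continuousOn.integrableOn_compact hs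
  have hsmall : ∀ᶠ t in 𝓝 (0 : ℝ), ∫ x in s, (p x).eval t ∂μ = μ.real s := by
    simpa only [hp, hfderiv] using eventually_integral_det_one_add_smul_fderiv_eq μ hs hsc
      (hr.sub contDiff_fun_id) fun x hx => sub_eq_zero.2 (hrs hx)
  simpa [hp, A] using integral_eval_eq_of_infinite hdeg hint (infinite_of_mem_nhds 0 hsmall) 1

end Perturbation

section NoRetraction

variable {E : Type*} [NormedAddCommGroup E] [InnerProductSpace ℝ E] [FiniteDimensional ℝ E]

-- Differentiating `‖r‖ ^ 2` shows that `r x` is orthogonal to the range of `fderiv ℝ r x`.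
theorem det_fderiv_eq_zero_of_norm_eq {r : E → E} {x : E} (hr : DifferentiableAt ℝ r x) {R : ℝ}
    (hR : R ≠ 0) (hnorm : ∀ x, ‖r x‖ = R) : (fderiv ℝ r x).det = 0 := by
  by_contra hdet
  obtain ⟨u, hu⟩ := (LinearMap.equivOfDetNeZero (fderiv ℝ r x : E →ₗ[ℝ] E) hdet).surjective (r x)
  have hsq : (fun y => ‖r y‖ ^ 2) = fun _ => R ^ 2 := funext fun y => by rw [hnorm]
  have horth := hr.hasFDerivAt.norm_sq
  rw [hsq] at horth
  have hzero := DFunLike.congr_fun (horth.unique (hasFDerivAt_const _ _)) u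
  replace hu : fderiv ℝ r x u = r x := hu
  simp [hu, hnorm, hR] at hzero

theorem exists_norm_eq_and_ne_of_contDiff {r : E → E} (hr : ContDiff ℝ 1 r) {R : ℝ} (hR : 0 < R)
    (hnorm : ∀ x, ‖r x‖ = R) : ∃ x, ‖x‖ = R ∧ r x ≠ x := by
  by_contra! hid
  borelize E
  have := FiniteDimensional.proper ℝ E
  let μ : Measure E := Measure.addHaar
  have hfrontier : EqOn r id (frontier (closedBall 0 R)) := fun x hx =>
    hid x (mem_sphere_zero_iff_norm.1 (frontier_closedBall (0 : E) hR.ne' ▸ hx))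
  have hvol := integral_det_fderiv_eq_measureReal μ (isCompact_closedBall (0 : E) R)
    (convex_closedBall _ _) hr hfrontier
  have hpos : 0 < μ.real (closedBall 0 R) :=
    ENNReal.toReal_pos (measure_closedBall_pos μ 0 hR).ne' measure_closedBall_lt_top.ne
  have hdet (x : E) : (fderiv ℝ r x).det = 0 :=
    det_fderiv_eq_zero_of_norm_eq (hr.differentiable one_ne_zero x) hR.ne' hnorm
  simp only [hdet, integral_zero] at hvol
  exact hpos.ne hvol

end NoRetraction

section FixedPoint

variable {E : Type*} [NormedAddCommGroup E] [InnerProductSpace ℝ E] [FiniteDimensional ℝ E]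
  {f : E → E}

-- If `f` had no fixed point, the normalized displacement `x - f x` would retract a large ball
-- onto its boundary sphere.
theorem exists_isFixedPt_of_contDiff (hf : ContDiff ℝ 1 f) (hfs : HasCompactSupport f) :
    ∃ x, Function.IsFixedPt f x := by
  by_contra! hfix
  have hdisp (x : E) : x - f x ≠ 0 := sub_ne_zero.2 (Ne.symm (hfix x))
  obtain ⟨R, hR, hfR⟩ := hfs.exists_pos_le_norm
  have hcont : ContDiff ℝ 1 fun x => x - f x := contDiff_id.sub hf
  have hr : ContDiff ℝ 1 fun x => (R * ‖x - f x‖⁻¹) • (x - f x) :=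
    (contDiff_const.mul ((hcont.norm ℝ hdisp).inv fun x => norm_ne_zero_iff.2 (hdisp x))).smul hcont
  obtain ⟨x, hx, hne⟩ := exists_norm_eq_and_ne_of_contDiff hr hR fun x => by
    rw [norm_smul, norm_mul, norm_inv, norm_norm, Real.norm_of_nonneg hR.le,
      inv_mul_cancel_right₀ (norm_ne_zero_iff.2 (hdisp x))]
  exact hne (by simp [hfR x hx.ge, hx, hR.ne'])

theorem exists_isFixedPt_of_hasCompactSupport (hf : Continuous f) (hfs : HasCompactSupport f) :
    ∃ x, Function.IsFixedPt f x := by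
  by_contra! hfix
  obtain ⟨g, hg, hgf, hsupport⟩ := hf.exists_contDiff_approx 1 (ε := fun x => ‖x - f x‖)
    (by fun_prop) fun x => norm_sub_pos_iff.2 (Ne.symm (hfix x))
  obtain ⟨x, hx⟩ := exists_isFixedPt_of_contDiff hg (hfs.mono hsupport)
  exact (hgf x).ne (by rw [hx, dist_eq_norm])

theorem exists_isFixedPt_of_isBounded_range (hf : Continuous f)
    (hbdd : Bornology.IsBounded (range f)) : ∃ x, Function.IsFixedPt f x := by
  obtain ⟨R, hR, hfR⟩ := hbdd.exists_pos_norm_le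
  let χ : ContDiffBump (0 : E) := ⟨R, R + 1, hR, lt_add_one R⟩
  obtain ⟨x, hx⟩ := exists_isFixedPt_of_hasCompactSupport (χ.continuous.smul hf)
    (χ.hasCompactSupport.smul_right (f' := f))
  replace hx : χ x • f x = x := hx
  have hxR : ‖x‖ ≤ R := by
    rw [← hx, norm_smul, Real.norm_of_nonneg χ.nonneg]
    exact (mul_le_of_le_one_left (norm_nonneg _) χ.le_one).trans (hfR _ (mem_range_self x))
  rw [χ.one_of_mem_closedBall (mem_closedBall_zero_iff.2 hxR), one_smul] at hx
  exact ⟨x, hx⟩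

end FixedPoint

section VariationalInequality

theorem exists_lipschitzWith_projection {H : Type*} [NormedAddCommGroup H] [InnerProductSpace ℝ H]
    {K : Set H} (hK : IsComplete K) (hKc : Convex ℝ K) (hne : K.Nonempty) :
    ∃ π : H → K, LipschitzWith 1 π ∧ ∀ u, ∀ w ∈ K, inner ℝ (u - π u) (w - π u) ≤ 0 := by
  choose p hpK hp using exists_norm_eq_iInf_of_complete_convex hne hK hKc
  have hinner (u : H) : ∀ w ∈ K, inner ℝ (u - p u) (w - p u) ≤ 0 :=
    (norm_eq_iInf_iff_real_inner_le_zero hKc (hpK u)).1 (hp u)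
  refine ⟨fun u => ⟨p u, hpK u⟩, LipschitzWith.of_dist_le_mul fun x y => ?_, hinner⟩
  have hmono : ‖p x - p y‖ * ‖p x - p y‖ ≤ ‖x - y‖ * ‖p x - p y‖ := by
    calc ‖p x - p y‖ * ‖p x - p y‖
        = inner ℝ (p x - p y) (p x - p y) := (real_inner_self_eq_norm_mul_norm _).symm
      _ = inner ℝ (x - y) (p x - p y) + inner ℝ (x - p x) (p y - p x) +
          inner ℝ (y - p y) (p x - p y) := by
        simp only [inner_sub_left, inner_sub_right]
        ring
      _ ≤ inner ℝ (x - y) (p x - p y) := by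
        linarith [hinner x (p y) (hpK y), hinner y (p x) (hpK x)]
      _ ≤ ‖x - y‖ * ‖p x - p y‖ := real_inner_le_norm _ _
  rw [Subtype.dist_eq, dist_eq_norm, dist_eq_norm, NNReal.coe_one, one_mul]
  by_contra! hlt
  exact hmono.not_gt (mul_lt_mul_of_pos_right hlt ((norm_nonneg _).trans_lt hlt))

-- If `v` is a fixed point of `v ↦ π v + g (π v)`, where `π` is the metric projection onto `K`,
-- then `g (π v) = v - π v` makes an obtuse angle with `K` at `π v`.
theorem exists_forall_inner_sub_le_zero {E : Type*} [NormedAddCommGroup E] [InnerProductSpace ℝ E]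
    [FiniteDimensional ℝ E] {K : Set E} (hK : IsCompact K) (hKc : Convex ℝ K) (hne : K.Nonempty)
    {g : K → E} (hg : Continuous g) : ∃ x : K, ∀ w ∈ K, inner ℝ (g x) (w - x) ≤ 0 := by
  have := isCompact_iff_compactSpace.1 hK
  obtain ⟨π, hπ, hinner⟩ := exists_lipschitzWith_projection hK.isComplete hKc hne
  have hcont : Continuous fun x : K => (x : E) + g x := continuous_subtype_val.add hg
  obtain ⟨v, hv⟩ := exists_isFixedPt_of_isBounded_range (hcont.comp hπ.continuous)
    ((isCompact_range hcont).isBounded.subset (range_comp_subset_range π _))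
  refine ⟨π v, fun w hw => ?_⟩
  have hnormal : g (π v) = v - π v := eq_sub_of_add_eq' hv
  exact hnormal ▸ hinner v w hw

variable {V : Type*} [NormedAddCommGroup V] [NormedSpace ℝ V] [FiniteDimensional ℝ V]
  {K : Set V}

theorem exists_forall_apply_le_apply (hK : IsCompact K) (hKc : Convex ℝ K) (hne : K.Nonempty)
    {p : K → V →L[ℝ] ℝ} (hp : Continuous p) : ∃ x : K, ∀ w ∈ K, p x w ≤ p x x := by
  let e : V ≃L[ℝ] EuclideanSpace ℝ (Fin (Module.finrank ℝ V)) := toEuclidean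
  let ψ : e '' K ≃ₜ K := (e.toHomeomorph.image K).symm
  have hψ (y : e '' K) : e (ψ y) = y := congrArg Subtype.val (ψ.symm_apply_apply y)
  let g : e '' K → EuclideanSpace ℝ (Fin (Module.finrank ℝ V)) := fun y =>
    (InnerProductSpace.toDual ℝ _).symm ((p (ψ y)).comp (e.symm : _ →L[ℝ] V))
  have hg : Continuous g := by fun_prop
  obtain ⟨y, hy⟩ := exists_forall_inner_sub_le_zero (hK.image e.continuous)
    (hKc.linear_image e.toLinearMap) (hne.image e) hg
  refine ⟨ψ y, fun w hw => ?_⟩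
  have := hy (e w) (mem_image_of_mem e hw)
  simpa [g, ← hψ] using this

end VariationalInequality

section Kakutani

variable {V : Type*} [NormedAddCommGroup V] [NormedSpace ℝ V] [FiniteDimensional ℝ V]
  {K : Set V}

-- If no point of `K` is fixed, the functionals separating `x` from `F x` form convex sets which
-- admit, by upper hemicontinuity, locally constant selections; a partition of unity glues these
-- into a continuous selection, which contradicts the variational inequality.
theorem exists_mem_self_of_upperHemicontinuousOn (hK : IsCompact K) (hKc : Convex ℝ K)
    (hne : K.Nonempty) {F : V → Set V} (hF : UpperHemicontinuousOn F K)
    (hconvex : ∀ x ∈ K, Convex ℝ (F x)) (hclosed : ∀ x ∈ K, IsClosed (F x))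
    (hmeet : ∀ x ∈ K, (K ∩ F x).Nonempty) : ∃ x ∈ K, x ∈ F x := by
  by_contra! hfix
  have hlocal (x : K) : ∃ c : V →L[ℝ] ℝ, ∀ᶠ x' : K in 𝓝 x, ∀ y ∈ F x', c x' < c y := by
    obtain ⟨c, u, hcx, hcF⟩ := geometric_hahn_banach_point_closed (hconvex x x.2) (hclosed x x.2)
      (hfix x x.2)
    have hvalues := hF.forall_isOpen x x.2 _ (isOpen_lt continuous_const c.continuous) hcF
    rw [← map_nhds_subtype_val, eventually_map] at hvalues
    have hpoint : ∀ᶠ x' : K in 𝓝 x, c x' < u :=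
      (c.continuous.comp continuous_subtype_val).continuousAt.eventually_lt_const hcx
    exact ⟨c, by filter_upwards [hvalues, hpoint] with x' hx' hlt y hy using hlt.trans (hx' hy)⟩
  have hsep (x : K) : Convex ℝ {c : V →L[ℝ] ℝ | ∀ y ∈ F x, c x < c y} := by
    intro c hc d hd a b ha hb hab y hy
    have hpos : 0 < a * (c y - c x) + b * (d y - d x) :=
      convex_Ioi (0 : ℝ) (sub_pos.2 (hc y hy)) (sub_pos.2 (hd y hy)) ha hb hab
    simp only [add_apply, smul_apply, smul_eq_mul]
    linarith
  obtain ⟨p, hp⟩ := exists_continuous_forall_mem_convex_of_local_const hsep hlocal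
  obtain ⟨x, hx⟩ := exists_forall_apply_le_apply hK hKc hne p.continuous
  obtain ⟨y, hyK, hyF⟩ := hmeet x x.2
  exact (hp x y hyF).not_ge (hx y hyK)

theorem upperHemicontinuousOn_of_isClosed_graph {α β : Type*} [TopologicalSpace α]
    [TopologicalSpace β] {s : Set α} {t : Set β} (ht : IsCompact t) {F : α → Set β}
    (hF : ∀ x ∈ s, F x ⊆ t) (hgraph : IsClosed {q : α × β | q.1 ∈ s ∧ q.2 ∈ F q.1}) :
    UpperHemicontinuousOn F s := by
  refine upperHemicontinuousOn_iff_forall_isOpen.2 fun x _ u hu hxu => ?_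
  have hev : ∀ᶠ x' in 𝓝 x, ∀ y ∈ t, x' ∈ s → y ∈ F x' → y ∈ u := by
    refine ht.eventually_forall_of_forall_eventually fun y _ => ?_
    by_cases hy : y ∈ u
    · filter_upwards [continuous_snd.continuousAt.eventually_mem (hu.mem_nhds hy)]
        with q hq _ _ using hq
    · filter_upwards [hgraph.compl_mem_nhds (x := (x, y)) fun h => hy (hxu h.2)]
        with q hq hs hqF using absurd ⟨hs, hqF⟩ hq
  filter_upwards [nhdsWithin_le_nhds hev, self_mem_nhdsWithin] with x' hx' hs y hy
  exact hx' y (hF x' hs hy) hs hy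

theorem exists_mem_self_of_isClosed_graph (hK : IsCompact K) (hKc : Convex ℝ K) (hne : K.Nonempty)
    {F : V → Set V} (hFK : ∀ x ∈ K, F x ⊆ K) (hFne : ∀ x ∈ K, (F x).Nonempty)
    (hFc : ∀ x ∈ K, Convex ℝ (F x)) (hgraph : IsClosed {q : V × V | q.1 ∈ K ∧ q.2 ∈ F q.1}) :
    ∃ x ∈ K, x ∈ F x := by
  refine exists_mem_self_of_upperHemicontinuousOn hK hKc hne
    (upperHemicontinuousOn_of_isClosed_graph hK hFK hgraph) hFc (fun x hx => ?_) fun x hx => ?_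
  · simpa [hx] using hgraph.preimage (Continuous.prodMk_right x)
  · rw [inter_eq_right.2 (hFK x hx)]
    exact hFne x hx

theorem exists_forall_mem_of_isClosed_graph {ι : Type*} [Finite ι] {E : ι → Type*}
    [∀ i, NormedAddCommGroup (E i)] [∀ i, NormedSpace ℝ (E i)] [∀ i, FiniteDimensional ℝ (E i)]
    {S : ∀ i, Set (E i)} (hS : ∀ i, IsCompact (S i)) (hSc : ∀ i, Convex ℝ (S i))
    (hne : ∀ i, (S i).Nonempty) {B : ∀ i, (∀ j, E j) → Set (E i)}
    (hBS : ∀ i, ∀ x ∈ univ.pi S, B i x ⊆ S i) (hBne : ∀ i, ∀ x ∈ univ.pi S, (B i x).Nonempty)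
    (hBc : ∀ i, ∀ x ∈ univ.pi S, Convex ℝ (B i x))
    (hgraph : ∀ i, IsClosed {q : (∀ j, E j) × E i | q.1 ∈ univ.pi S ∧ q.2 ∈ B i q.1}) :
    ∃ x ∈ univ.pi S, ∀ i, x i ∈ B i x := by
  have := Fintype.ofFinite ι
  let F : (∀ j, E j) → Set (∀ j, E j) := fun x => univ.pi fun i => B i x
  have hclosed : IsClosed {q : (∀ j, E j) × (∀ j, E j) | q.1 ∈ univ.pi S ∧ q.2 ∈ F q.1} := by
    have hpi : IsClosed (univ.pi S) := isClosed_set_pi fun i _ => (hS i).isClosed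
    convert (hpi.preimage continuous_fst).inter (isClosed_iInter fun i =>
      (hgraph i).preimage (continuous_id.prodMap (continuous_apply i)))
    ext q
    simp +contextual [F]
  obtain ⟨x, hx, hfix⟩ := exists_mem_self_of_isClosed_graph (isCompact_univ_pi hS)
    (convex_pi fun i _ => hSc i) (univ_pi_nonempty_iff.2 hne)
    (fun x hx => pi_mono fun i _ => hBS i x hx) (fun x hx => univ_pi_nonempty_iff.2 (hBne · x hx))
    (fun x hx => convex_pi fun i _ => hBc i x hx) hclosed
  exact ⟨x, hx, fun i => hfix i (mem_univ i)⟩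

end Kakutani

section BestResponse

/-- The feasible set `{z ∈ S | ∀ k, H k p z ≤ 0}` of a player with action set `S` and constraint
functions `H k` when the environment, such as the actions of the other players, is `p`. -/
def feasibleSet {κ P Z : Type*} (S : Set Z) (H : κ → P → Z → ℝ) (p : P) : Set Z :=
  {z ∈ S | ∀ k, H k p z ≤ 0}

/-- The feasible actions which maximize the utility `U p` over the feasible set at `p`. -/
def bestResponse {κ P Z : Type*} (S : Set Z) (H : κ → P → Z → ℝ) (U : P → Z → ℝ) (p : P) : Set Z :=
  {z ∈ feasibleSet S H p | IsMaxOn (U p) (feasibleSet S H p) z}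

variable {κ P Z : Type*} {S : Set Z} {H : κ → P → Z → ℝ} {U : P → Z → ℝ} {p : P}

section Topology

variable [TopologicalSpace Z]

theorem isClosed_feasibleSet (hS : IsClosed S) (hH : ∀ k, ContinuousOn (H k p) S) :
    IsClosed (feasibleSet S H p) := by
  have hinter : feasibleSet S H p = S ∩ ⋂ k, S ∩ H k p ⁻¹' Iic 0 := by
    ext
    simp +contextual [feasibleSet]
  exact hinter ▸ hS.inter
    (isClosed_iInter fun k => (hH k).preimage_isClosed_of_isClosed hS isClosed_Iic)

theorem bestResponse_nonempty [T2Space Z] (hS : IsCompact S) (hH : ∀ k, ContinuousOn (H k p) S)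
    (hU : ContinuousOn (U p) S) (hne : (feasibleSet S H p).Nonempty) :
    (bestResponse S H U p).Nonempty :=
  (hS.of_isClosed_subset (isClosed_feasibleSet hS.isClosed hH) (sep_subset _ _)).exists_isMaxOn hne
    (hU.mono (sep_subset _ _))

end Topology

variable [AddCommGroup Z] [Module ℝ Z]

theorem convex_feasibleSet (hS : Convex ℝ S) (hH : ∀ k, QuasiconvexOn ℝ S (H k p)) :
    Convex ℝ (feasibleSet S H p) := by
  have hinter : feasibleSet S H p = S ∩ ⋂ k, {z ∈ S | H k p z ≤ 0} := by
    ext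
    simp +contextual [feasibleSet]
  exact hinter ▸ hS.inter (convex_iInter fun k => hH k 0)

theorem convex_bestResponse (hH : ∀ k, QuasiconvexOn ℝ S (H k p)) (hU : QuasiconcaveOn ℝ S (U p)) :
    Convex ℝ (bestResponse S H U p) := by
  intro y hy z hz a b ha hb hab
  have hfeas := convex_feasibleSet hU.convex hH hy.1 hz.1 ha hb hab
  have hlevel := hU (U p y) ⟨hy.1.1, le_rfl⟩ ⟨hz.1.1, hz.2 hy.1⟩ ha hb hab
  exact ⟨hfeas, fun w hw => (hy.2 hw).trans hlevel.2⟩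

variable [TopologicalSpace Z] [IsTopologicalAddGroup Z] [ContinuousSMul ℝ Z]

theorem feasibleSet_subset_closure (hS : Convex ℝ S) (hH : ∀ k, ConvexOn ℝ S (H k p)) {z₀ : Z}
    (hz₀ : z₀ ∈ S) (hslater : ∀ k, H k p z₀ < 0) :
    feasibleSet S H p ⊆ closure {z ∈ S | ∀ k, H k p z < 0} := by
  intro z hz
  have hsegment : openSegment ℝ z₀ z ⊆ {z ∈ S | ∀ k, H k p z < 0} := by
    rintro _ ⟨a, b, ha, hb, hab, rfl⟩
    refine ⟨hS hz₀ hz.1 ha.le hb.le hab, fun k => ?_⟩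
    calc H k p (a • z₀ + b • z) ≤ a • H k p z₀ + b • H k p z :=
          (hH k).2 hz₀ hz.1 ha.le hb.le hab
      _ < 0 := add_neg_of_neg_of_nonpos (smul_neg_of_pos_of_neg ha (hslater k))
          (smul_nonpos_of_nonneg_of_nonpos hb.le (hz.2 k))
  exact closure_mono hsegment (segment_subset_closure_openSegment (right_mem_segment ℝ z₀ z))

-- Slater's condition makes strictly feasible actions dense among the feasible ones, and a strictly
-- feasible action remains feasible when the environment is perturbed.
theorem isClosed_graph_bestResponse [TopologicalSpace P] [Finite κ] {D : Set P} (hD : IsClosed D)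
    (hS : IsClosed S) (hSc : Convex ℝ S)
    (hH : ∀ k, ContinuousOn (Function.uncurry (H k)) (D ×ˢ S))
    (hU : ContinuousOn (Function.uncurry U) (D ×ˢ S)) (hHc : ∀ k, ∀ p ∈ D, ConvexOn ℝ S (H k p))
    (hslater : ∀ p ∈ D, ∃ z ∈ S, ∀ k, H k p z < 0) :
    IsClosed {q : P × Z | q.1 ∈ D ∧ q.2 ∈ bestResponse S H U q.1} := by
  let G : Set (P × Z) := {q | q.1 ∈ D ∧ q.2 ∈ bestResponse S H U q.1}
  have hG : G ⊆ D ×ˢ S := fun q hq => ⟨hq.1, hq.2.1.1⟩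
  refine isClosed_of_closure_subset fun q hq => ?_
  obtain ⟨p, c⟩ := q
  have hpc : (p, c) ∈ D ×ˢ S := closure_minimal hG (hD.prod hS) hq
  have := mem_closure_iff_nhdsWithin_neBot.1 hq
  have hgraph : ∀ᶠ q in 𝓝[G] (p, c), q ∈ G := self_mem_nhdsWithin
  have hjoint {W : P → Z → ℝ} (hW : ContinuousOn (Function.uncurry W) (D ×ˢ S)) :
      Tendsto (fun q => W q.1 q.2) (𝓝[G] (p, c)) (𝓝 (W p c)) :=
    (hW _ hpc).mono_left (nhdsWithin_mono _ hG)
  have hfixed {W : P → Z → ℝ} (hW : ContinuousOn (Function.uncurry W) (D ×ˢ S)) {y : Z}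
      (hy : y ∈ S) : Tendsto (fun q => W q.1 y) (𝓝[G] (p, c)) (𝓝 (W p y)) :=
    Tendsto.comp (hW.uncurry_right y hy p hpc.1) (continuousWithinAt_fst.tendsto_nhdsWithin
      fun _ hq => (hG hq).1)
  have hc : c ∈ feasibleSet S H p := ⟨hpc.2, fun k =>
    le_of_tendsto (hjoint (hH k)) (hgraph.mono fun q hq => hq.2.1.2 k)⟩
  have hstrict : {z ∈ S | ∀ k, H k p z < 0} ⊆ S ∩ U p ⁻¹' Iic (U p c) := by
    rintro y ⟨hyS, hy⟩
    have hfeas : ∀ᶠ q in 𝓝[G] (p, c), ∀ k, H k q.1 y < 0 :=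
      eventually_all.2 fun k => (hfixed (hH k) hyS).eventually_lt_const (hy k)
    refine ⟨hyS, le_of_tendsto_of_tendsto (hfixed hU hyS) (hjoint hU) ?_⟩
    filter_upwards [hgraph, hfeas] with q hq hqy using hq.2.2 ⟨hyS, fun k => (hqy k).le⟩
  have hclosed : IsClosed (S ∩ U p ⁻¹' Iic (U p c)) :=
    (hU.uncurry_left p hpc.1).preimage_isClosed_of_isClosed hS isClosed_Iic
  obtain ⟨z₀, hz₀, hz₀neg⟩ := hslater p hpc.1
  exact ⟨hpc.1, hc, fun z hz => (closure_minimal hstrict hclosed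
    (feasibleSet_subset_closure hSc (hHc · p hpc.1) hz₀ hz₀neg hz)).2⟩

end BestResponse

theorem stmt_16_general {ι : Type*} [Finite ι] [DecidableEq ι] {E κ : ι → Type*}
    [∀ i, NormedAddCommGroup (E i)] [∀ i, NormedSpace ℝ (E i)] [∀ i, FiniteDimensional ℝ (E i)]
    [∀ i, Finite (κ i)] {S : ∀ i, Set (E i)} (hSne : ∀ i, (S i).Nonempty)
    (hScomp : ∀ i, IsCompact (S i)) {v : ι → (∀ j, E j) → ℝ}
    (hvcont : ∀ i, ContinuousOn (v i) (univ.pi S))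
    (hvconc : ∀ i, ∀ x ∈ univ.pi S,
      QuasiconcaveOn ℝ (S i) fun z => v i (Function.update x i z))
    {h : ∀ i, κ i → (∀ j, E j) → ℝ} (hhcont : ∀ i k, ContinuousOn (h i k) (univ.pi S))
    (hhconv : ∀ i k, ∀ x ∈ univ.pi S, ConvexOn ℝ (S i) fun z => h i k (Function.update x i z))
    (hslater : ∀ i, ∀ x ∈ univ.pi S, ∃ z ∈ S i, ∀ k, h i k (Function.update x i z) < 0) :
    ∃ xstar : ∀ j, E j, (∀ i, xstar i ∈ S i) ∧ ∀ i, (∀ k, h i k xstar ≤ 0) ∧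
      ∀ z ∈ S i, (∀ k, h i k (Function.update xstar i z) ≤ 0) →
        v i (Function.update xstar i z) ≤ v i xstar := by
  let H i (k : κ i) x z := h i k (Function.update x i z)
  let U i x z := v i (Function.update x i z)
  have hcont {i} {f : (∀ j, E j) → ℝ} (hf : ContinuousOn f (univ.pi S)) : ContinuousOn
      (Function.uncurry fun x z => f (Function.update x i z)) (univ.pi S ×ˢ S i) :=
    hf.comp (continuous_fst.update i continuous_snd).continuousOn fun _ hq =>
      (update_mem_pi_iff_of_mem hq.1).2 fun _ => hq.2
  have hSconv (i) : Convex ℝ (S i) :=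
    have ⟨x, hx⟩ := univ_pi_nonempty_iff.2 hSne
    (hvconc i x hx).convex
  have hne (i) (x) (hx : x ∈ univ.pi S) : (bestResponse (S i) (H i) (U i) x).Nonempty :=
    have ⟨z, hz, hneg⟩ := hslater i x hx
    bestResponse_nonempty (hScomp i) (fun k => (hcont (hhcont i k)).uncurry_left x hx)
      ((hcont (hvcont i)).uncurry_left x hx) ⟨z, hz, fun k => (hneg k).le⟩
  obtain ⟨x, hx, hbest⟩ := exists_forall_mem_of_isClosed_graph hScomp hSconv hSne
    (fun i x _ z hz => hz.1.1) hne
    (fun i x hx => convex_bestResponse (fun k => (hhconv i k x hx).quasiconvexOn) (hvconc i x hx))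
    fun i => isClosed_graph_bestResponse (isClosed_set_pi fun j _ => (hScomp j).isClosed)
      (hScomp i).isClosed (hSconv i) (fun k => hcont (hhcont i k)) (hcont (hvcont i))
      (hhconv i) (hslater i)
  refine ⟨x, fun i => hx i (mem_univ i), fun i => ⟨fun k => ?_, fun z hz hfeas => ?_⟩⟩
  · simpa only [H, Function.update_eq_self] using (hbest i).1.2 k
  · simpa only [U, mem_ofPred_eq, Function.update_eq_self] using (hbest i).2 ⟨hz, hfeas⟩

/-- Existence of equilibria in concave games with externality constraints: `n` players,
player `i` with compact convex nonempty action set `S i ⊆ ℝ^{m i}`, utility `v i`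
continuous in the profile and concave in own action, constraints `h i k ≤ 0` with each
`h i k` continuous in the profile and convex in own action, and a Slater-type default
action `x0 i ∈ S i` strictly satisfying all of player `i`'s constraints against every
profile of others' actions. Then an equilibrium exists. -/
theorem stmt_16 (n : ℕ) (mdim : Fin n → ℕ) (d : Fin n → ℕ)
    (S : ∀ i : Fin n, Set (EuclideanSpace ℝ (Fin (mdim i))))
    (hSne : ∀ i, (S i).Nonempty) (hScomp : ∀ i, IsCompact (S i))
    (hSconv : ∀ i, Convex ℝ (S i))
    (v : ∀ i : Fin n, (∀ j : Fin n, EuclideanSpace ℝ (Fin (mdim j))) → ℝ)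
    (hvcont : ∀ i, Continuous (v i))
    (hvconc : ∀ i (x : ∀ j, EuclideanSpace ℝ (Fin (mdim j))),
      ConcaveOn ℝ (S i) (fun z => v i (Function.update x i z)))
    (h : ∀ i : Fin n, Fin (d i) → (∀ j : Fin n, EuclideanSpace ℝ (Fin (mdim j))) → ℝ)
    (hhcont : ∀ i k, Continuous (h i k))
    (hhconv : ∀ i k (x : ∀ j, EuclideanSpace ℝ (Fin (mdim j))),
      ConvexOn ℝ (S i) (fun z => h i k (Function.update x i z)))
    (x0 : ∀ i : Fin n, EuclideanSpace ℝ (Fin (mdim i)))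
    (hx0 : ∀ i, x0 i ∈ S i)
    (hslater : ∀ i k (x : ∀ j, EuclideanSpace ℝ (Fin (mdim j))),
      (∀ j, x j ∈ S j) → h i k (Function.update x i (x0 i)) < 0) :
    ∃ xstar : ∀ j : Fin n, EuclideanSpace ℝ (Fin (mdim j)),
      (∀ i, xstar i ∈ S i) ∧
      ∀ i, (∀ k, h i k xstar ≤ 0) ∧
        ∀ z ∈ S i, (∀ k, h i k (Function.update xstar i z) ≤ 0) →
          v i (Function.update xstar i z) ≤ v i xstar := by
  exact stmt_16_general hSne hScomp (fun i => (hvcont i).continuousOn)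
    (fun i x _ => (hvconc i x).quasiconcaveOn) (fun i k => (hhcont i k).continuousOn)
    (fun i k x _ => hhconv i k x)
    fun i x hx => ⟨x0 i, hx0 i, fun k => hslater i k x fun j => hx j (mem_univ j)⟩
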